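/- Fix ε > 0 and p, q ∈ (0,1). The function g(t) = (1/p) · (log(t + ε + (t+ε)^q))^p is strictly concave on the convex set {t ∈ ℝ : t ≥ 0 and t + ε + (t+ε)^q > 1}. -/

import Mathlib

/-!
The function is `φ ∘ h` with `h t = t + ε + (t + ε) ^ q` and `φ y = p⁻¹ (log y) ^ p` on `(1, ∞)`.
Here `h` is concave and strictly increasing, `log` is strictly concave, and `u ↦ p⁻¹ u ^ p` has
the positive, nonincreasing derivative `u ^ (p - 1)` on `(0, ∞)` for every nonzero `p ≤ 1`, negative
`p` included. So `φ` is strictly concave and increasing, and composing it with the concave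
injective `h` gives a strictly concave function.
-/

open Set

section Composition

variable {𝕜 E α β : Type*} [Semiring 𝕜] [PartialOrder 𝕜] [AddCommMonoid E]
  [AddCommMonoid α] [PartialOrder α] [AddCommMonoid β] [PartialOrder β]
  [SMul 𝕜 E] [SMul 𝕜 α] [SMul 𝕜 β] {s : Set E} {t : Set α} {f : E → α} {g : α → β}

theorem strictConcaveOn_comp_of_mapsTo (hg : StrictConcaveOn 𝕜 t g) (hg_mono : MonotoneOn g t)
    (hf : ConcaveOn 𝕜 s f) (hf_inj : InjOn f s) (hst : MapsTo f s t) :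
    StrictConcaveOn 𝕜 s (g ∘ f) := by
  refine ⟨hf.1, fun x hx y hy hxy a b ha hb hab ↦ ?_⟩
  calc a • g (f x) + b • g (f y)
      < g (a • f x + b • f y) := hg.2 (hst hx) (hst hy) (hf_inj.ne hx hy hxy) ha hb hab
    _ ≤ g (f (a • x + b • y)) :=
      hg_mono (hg.1 (hst hx) (hst hy) ha.le hb.le hab) (hst (hf.1 hx hy ha.le hb.le hab))
        (hf.2 hx hy ha.le hb.le hab)

end Composition

section OuterFunction

variable {p : ℝ}

theorem hasDerivAt_one_div_mul_rpow (hp : p ≠ 0) {x : ℝ} (hx : x ≠ 0) :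
    HasDerivAt (fun u : ℝ ↦ 1 / p * u ^ p) (x ^ (p - 1)) x := by
  convert! (Real.hasDerivAt_rpow_const (.inl hx)).const_mul (1 / p) using 1
  field_simp

theorem strictMonoOn_one_div_mul_rpow (hp : p ≠ 0) :
    StrictMonoOn (fun u : ℝ ↦ 1 / p * u ^ p) (Ioi 0) := by
  have hasDerivAt {x : ℝ} (hx : x ∈ Ioi 0) := hasDerivAt_one_div_mul_rpow hp (ne_of_gt hx)
  refine strictMonoOn_of_deriv_pos (convex_Ioi 0)
    (fun x hx ↦ (hasDerivAt hx).continuousAt.continuousWithinAt) fun x hx ↦ ?_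
  rw [interior_Ioi] at hx
  rw [(hasDerivAt hx).deriv]
  exact Real.rpow_pos_of_pos hx _

theorem concaveOn_one_div_mul_rpow (hp : p ≠ 0) (hp_le : p ≤ 1) :
    ConcaveOn ℝ (Ioi 0) fun u : ℝ ↦ 1 / p * u ^ p := by
  have hasDerivAt {x : ℝ} (hx : x ∈ Ioi 0) := hasDerivAt_one_div_mul_rpow hp (ne_of_gt hx)
  have deriv_antitone : AntitoneOn (deriv fun u : ℝ ↦ 1 / p * u ^ p) (Ioi 0) := by
    intro x hx y hy hxy
    rw [(hasDerivAt hx).deriv, (hasDerivAt hy).deriv]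
    exact Real.antitoneOn_rpow_Ioi_of_exponent_nonpos (sub_nonpos.2 hp_le) hx hy hxy
  refine AntitoneOn.concaveOn_of_deriv (convex_Ioi 0)
    (fun x hx ↦ (hasDerivAt hx).continuousAt.continuousWithinAt) ?_ ?_ <;> rw [interior_Ioi]
  · exact fun x hx ↦ (hasDerivAt hx).differentiableAt.differentiableWithinAt
  · exact deriv_antitone

theorem strictMonoOn_one_div_mul_log_rpow (hp : p ≠ 0) :
    StrictMonoOn (fun y : ℝ ↦ 1 / p * Real.log y ^ p) (Ioi 1) :=
  (strictMonoOn_one_div_mul_rpow hp).comp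
    (Real.strictMonoOn_log.mono (Ioi_subset_Ioi zero_le_one)) fun _ hy ↦ Real.log_pos hy

theorem strictConcaveOn_one_div_mul_log_rpow (hp : p ≠ 0) (hp_le : p ≤ 1) :
    StrictConcaveOn ℝ (Ioi 1) fun y : ℝ ↦ 1 / p * Real.log y ^ p := by
  have log_concave : StrictConcaveOn ℝ (Ioi 1) Real.log :=
    strictConcaveOn_log_Ioi.subset (Ioi_subset_Ioi zero_le_one) (convex_Ioi 1)
  refine ConcaveOn.comp_strictConcaveOn (g := fun u : ℝ ↦ 1 / p * u ^ p) ?_ log_concave ?_ <;>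
    rw [Real.image_log_Ioi one_pos, Real.log_one]
  · exact concaveOn_one_div_mul_rpow hp hp_le
  · exact strictMonoOn_one_div_mul_rpow hp

theorem strictConcaveOn_one_div_mul_log_rpow_comp {E : Type*} [AddCommMonoid E] [Module ℝ E]
    {s : Set E} {h : E → ℝ} (hp : p ≠ 0) (hp_le : p ≤ 1) (hh : ConcaveOn ℝ s h)
    (hh_inj : InjOn h s) :
    StrictConcaveOn ℝ {x ∈ s | 1 < h x} fun x ↦ 1 / p * Real.log (h x) ^ p :=
  strictConcaveOn_comp_of_mapsTo (g := fun y : ℝ ↦ 1 / p * Real.log y ^ p)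
    (strictConcaveOn_one_div_mul_log_rpow hp hp_le)
    (strictMonoOn_one_div_mul_log_rpow hp).monotoneOn
    (hh.subset (sep_subset s _) (hh.convex_gt 1)) (hh_inj.mono (sep_subset s _)) fun _ hx ↦ hx.2

end OuterFunction

section InnerFunction

variable {q : ℝ}

theorem concaveOn_add_rpow (hq : q ∈ Icc 0 1) : ConcaveOn ℝ (Ici 0) fun x : ℝ ↦ x + x ^ q :=
  (concaveOn_id (convex_Ici 0)).add (Real.concaveOn_rpow hq.1 hq.2)

theorem strictMonoOn_add_rpow (hq : 0 ≤ q) : StrictMonoOn (fun x : ℝ ↦ x + x ^ q) (Ici 0) :=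
  strictMonoOn_id.add_monotone (Real.monotoneOn_rpow_Ici_of_exponent_nonneg hq)

end InnerFunction

theorem strictConcaveOn_logpow_general {ε p q : ℝ} (hε : 0 ≤ ε) (hp : p ≠ 0) (hp_le : p ≤ 1)
    (hq : q ∈ Icc 0 1) :
    StrictConcaveOn ℝ {t : ℝ | 0 ≤ t ∧ 1 < t + ε + (t + ε) ^ q}
      (fun t : ℝ => (1 / p) * Real.log (t + ε + (t + ε) ^ q) ^ p) := by
  have shift_mapsTo : MapsTo (· + ε) (Ici 0) (Ici 0) := fun _ ht ↦ add_nonneg ht hε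
  have inner_concave : ConcaveOn ℝ (Ici 0) fun t : ℝ ↦ t + ε + (t + ε) ^ q :=
    ((concaveOn_add_rpow hq).translate_left ε).subset
      (fun t ht ↦ add_nonneg hε ht) (convex_Ici 0)
  have inner_injOn : InjOn (fun t : ℝ ↦ t + ε + (t + ε) ^ q) (Ici 0) :=
    (strictMonoOn_add_rpow hq.1).injOn.comp (add_left_injective ε).injOn shift_mapsTo
  exact strictConcaveOn_one_div_mul_log_rpow_comp hp hp_le inner_concave inner_injOn

/-- For fixed `ε > 0` and `p, q ∈ (0,1)`, the function
`t ↦ (1/p) * (log (t + ε + (t+ε)^q))^p` is strictly concave on the convex set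
`{t : 0 ≤ t ∧ t + ε + (t+ε)^q > 1}`. -/
theorem strictConcaveOn_logpow (ε p q : ℝ) (hε : 0 < ε)
    (hp : p ∈ Set.Ioo (0 : ℝ) 1) (hq : q ∈ Set.Ioo (0 : ℝ) 1) :
    StrictConcaveOn ℝ {t : ℝ | 0 ≤ t ∧ 1 < t + ε + (t + ε) ^ q}
      (fun t : ℝ => (1 / p) * Real.log (t + ε + (t + ε) ^ q) ^ p) :=
  strictConcaveOn_logpow_general hε.le hp.1.ne' hp.2.le (Set.Ioo_subset_Icc_self hq)
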